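/- For every cardinal number α ≥ 𝔠, there exists a metrizable topological space X with |X| = α such that every quasiordered set (Q, ≤) with |Q| ≤ α has a representation by clopen subspaces of X with respect to injective continuous maps; that is, there is a family {X(q) : q ∈ Q} of pairwise non-homeomorphic clopen subsets of X such that q ≤ q' if and only if there exists an injective continuous map from X(q) into X(q'). -/

import Mathlib

universe u

open Cardinal

/-- There exists an injective continuous map from `A` into `B`. -/
def ExistsInjCont (A : Type*) [TopologicalSpace A]
    (B : Type*) [TopologicalSpace B] : Prop :=
  ∃ f : A → B, Continuous f ∧ Function.Injective f

/-- The representation property of the space `X` for a quasiorder, with respect to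
injective continuous maps. -/
def RepresentsByInjCont (α : Cardinal.{u}) (X : Type u) [TopologicalSpace X] : Prop :=
  ∀ (Q : Type u) (le : Q → Q → Prop), #Q ≤ α →
    (∀ q, le q q) → (∀ a b c, le a b → le b c → le a c) →
    ∃ Xq : Q → Set X,
      (∀ q, IsClopen (Xq q)) ∧
      (∀ q q', q ≠ q' → IsEmpty ((Xq q) ≃ₜ (Xq q'))) ∧
      (∀ q q', le q q' ↔ ExistsInjCont (Xq q) (Xq q'))

/-!
A diagonalization of length `𝔠` gives a subspace `K` of the plane, containing an infinite closed
discrete set of marked points, such that every continuous injection of an open subset of `K` into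
`K` is an inclusion and the unmarked points form a dense connected set. Copies of `K` are glued at
marked points so as to encode a relational structure: the copies are its edges, and the way two of
them are glued records common ends and labels. By rigidity, a continuous injection between two
spaces of this kind maps every copy identically onto a copy, so it induces a homomorphism of the
encoded structures; conversely, an injective homomorphism induces a continuous injection.

It remains to represent the quasiorder by relational structures. Let `V` be a well-order of
cardinality `α` with a greatest element, equipped with a cofinal `ω`-sequence, its ladder, at each
supremum of a strictly increasing sequence. The only self-map of `V` preserving the strict order
and the ladders is the identity, so marking the position `v` gives structures `V_v` with no
homomorphism between any two distinct ones. Embed `Q` in `V`, and let `X(q)` be the space of the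
disjoint union of countably many copies of `V_p` for each `p ≤ q`, at levels `1, 2, …`, together
with one more copy of `V_q` at level `0`. Raising all levels by one embeds `X(q)` in `X(q')` when
`q ≤ q'`. Since positive levels carry a mark, a homomorphism cannot lower a positive level to `0`;
so a homeomorphism preserves the copy at level `0`, and `q` can be recovered from it.
-/

open Set Topology Filter
open scoped ENNReal

/-! ### Diagonalization against relations -/

section Diagonalization

variable {P T : Type u} {κ : Cardinal.{u}}

/-- A relation that no set of fewer than `κ` points can block: off any such set it still relates
two distinct points. These are the relations that a diagonalization of length `κ` can handle. -/
def IsUnavoidable (κ : Cardinal.{u}) (W : Set (P × P)) : Prop :=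
  ∀ F : Set P, #F < κ → ∃ z ∈ W, z.1 ∉ F ∧ z.2 ∉ F ∧ z.1 ≠ z.2

theorem exists_selection_of_isUnavoidable [LinearOrder T] [WellFoundedLT T] (hκ : ℵ₀ ≤ κ)
    (hT : ∀ t : T, #(Iio t) < κ) {W : T → Set (P × P)} (hW : ∀ t, IsUnavoidable κ (W t)) :
    ∃ f : T → P × P, ∀ t, f t ∈ W t ∧ (f t).1 ≠ (f t).2 ∧
      ∀ s < t, (f t).1 ≠ (f s).2 ∧ (f t).2 ≠ (f s).1 := by
  have card_used (t : T) (g : Iio t → P × P) :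
      #(range (Prod.fst ∘ g) ∪ range (Prod.snd ∘ g) : Set P) < κ :=
    (mk_union_le _ _).trans_lt
      (add_lt_of_lt hκ (mk_range_le.trans_lt (hT t)) (mk_range_le.trans_lt (hT t)))
  choose next next_mem next_fst next_snd next_ne using fun t g => hW t _ (card_used t g)
  let f : T → P × P := wellFounded_lt.fix fun t earlier => next t fun s => earlier s s.2
  have f_eq (t : T) : f t = next t fun s => f s := wellFounded_lt.fix_eq _ t
  refine ⟨f, fun t => ?_⟩
  rw [f_eq t]
  refine ⟨next_mem t _, next_ne t _, fun s hst => ⟨fun h => ?_, fun h => ?_⟩⟩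
  · exact next_fst t _ (by rw [h]; exact Or.inr ⟨⟨s, hst⟩, rfl⟩)
  · exact next_snd t _ (by rw [h]; exact Or.inl ⟨⟨s, hst⟩, rfl⟩)

theorem IsUnavoidable.inter_compl_prod {W : Set (P × P)} (hW : IsUnavoidable κ W) (hκ : ℵ₀ ≤ κ)
    {D : Set P} (hD : #D < κ) : IsUnavoidable κ (W ∩ Dᶜ ×ˢ Dᶜ) := fun F hF => by
  obtain ⟨z, hzW, hz₁, hz₂, hne⟩ := hW _ ((mk_union_le F D).trans_lt (add_lt_of_lt hκ hF hD))
  rw [mem_union, not_or] at hz₁ hz₂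
  exact ⟨z, ⟨hzW, hz₁.2, hz₂.2⟩, hz₁.1, hz₂.1, hne⟩

theorem exists_disjoint_forall_isUnavoidable (hκ : ℵ₀ ≤ κ) (hT : #T ≤ κ) (W : T → Set (P × P))
    {D : Set P} (hD : #D < κ) :
    ∃ L : Set P, Disjoint L D ∧
      ∀ t, IsUnavoidable κ (W t) → ∃ z ∈ W t, z.1 ∈ L ∧ z.2 ∉ L ∪ D := by
  let S := {t // IsUnavoidable κ (W t)}
  obtain ⟨_, _, hord⟩ := exists_ord_eq_type_lt S
  have card_Iio (s : S) : #(Iio s) < κ :=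
    (mk_Iio_lt s hord).trans_le ((mk_subtype_le _).trans hT)
  obtain ⟨f, hf⟩ := exists_selection_of_isUnavoidable hκ card_Iio
    fun s => s.2.inter_compl_prod hκ hD
  refine ⟨range fun s => (f s).1, ?_,
    fun t ht => ⟨f ⟨t, ht⟩, (hf ⟨t, ht⟩).1.1, mem_range_self _, ?_⟩⟩
  · rw [Set.disjoint_left]
    rintro _ ⟨s, rfl⟩
    exact (hf s).1.2.1
  · rintro (⟨s, hs : (f s).1 = _⟩ | hmem)
    · rcases lt_trichotomy s ⟨t, ht⟩ with h | rfl | h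
      · exact ((hf _).2.2 s h).2 hs.symm
      · exact (hf _).2.1 hs
      · exact ((hf s).2.2 _ h).1 hs
    · exact (hf _).1.2.2 hmem

theorem isUnavoidable_prod_univ (hκ : ℵ₀ ≤ κ) {C : Set P} (hC : κ ≤ #C) :
    IsUnavoidable κ (C ×ˢ Set.univ) := fun F hF => by
  have lt_mk_of_lt {G : Set P} (hG : #G < κ) : #G < #C := hG.trans_le hC
  obtain ⟨x, hxC, hxF⟩ := sdiff_nonempty_of_mk_lt_mk (lt_mk_of_lt hF)
  have hF' : #(insert x F : Set P) < κ :=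
    mk_insert_le.trans_lt (add_lt_of_lt hκ hF (one_lt_aleph0.trans_le hκ))
  obtain ⟨y, -, hy⟩ := sdiff_nonempty_of_mk_lt_mk (lt_mk_of_lt hF')
  rw [mem_insert_iff, not_or] at hy
  exact ⟨(x, y), ⟨hxC, mem_univ y⟩, hxF, hy.2, Ne.symm hy.1⟩

/-- The part of a relation `Z` on which it is the graph of a partial function. -/
def univalentPart (Z : Set (P × P)) : Set (P × P) :=
  {z ∈ Z | ∀ y, (z.1, y) ∈ Z → y = z.2}

theorem exists_mem_notMem_notMem_of_injOn {X : Type u} {S : Set X} {a b : X → P} {F : Set P}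
    (ha : InjOn a S) (hb : InjOn b S) (hS : ℵ₀ ≤ #S) (hF : #F < #S) :
    ∃ x ∈ S, a x ∉ F ∧ b x ∉ F := by
  have card_inter {c : X → P} (hc : InjOn c S) : #(S ∩ c ⁻¹' F : Set X) < #S :=
    (mk_le_of_injective <| (MapsTo.restrict_inj fun _ hx => hx.2).2 <|
      hc.mono inter_subset_left).trans_lt hF
  obtain ⟨x, hxS, hx⟩ := sdiff_nonempty_of_mk_lt_mk <|
    (mk_union_le (S ∩ a ⁻¹' F) (S ∩ b ⁻¹' F)).trans_lt
      (add_lt_of_lt hS (card_inter ha) (card_inter hb))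
  exact ⟨x, hxS, fun h => hx (Or.inl ⟨hxS, h⟩), fun h => hx (Or.inr ⟨hxS, h⟩)⟩

end Diagonalization

/-! ### Locally rigid subspaces of perfect Polish spaces -/

section LocallyRigid

/-- Half of the definition of a Bernstein set: `L` meets every uncountable closed set. -/
def MeetsUncountableClosed {P : Type*} [TopologicalSpace P] (L : Set P) : Prop :=
  ∀ C, IsClosed C → ¬ C.Countable → (L ∩ C).Nonempty

/-- A space in which the only continuous injections of an open subset into the whole space are
the inclusions. Such an injection is encoded as a total map that is only controlled on the open
subset. -/
def LocallyRigid (K : Type*) [TopologicalSpace K] : Prop :=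
  ∀ (U : Set K) (p : K → K), IsOpen U → ContinuousOn p U → InjOn p U → EqOn p id U

variable {P : Type u} [TopologicalSpace P] {L C D : Set P}

theorem mk_isClosed_le_continuum [SecondCountableTopology P] :
    #{C : Set P // IsClosed C} ≤ 𝔠 := by
  borelize P
  have : MeasurableSpace.CountablyGenerated P := inferInstance
  obtain ⟨b, hb, hgen⟩ := this
  refine (mk_le_mk_of_subset fun C (hC : IsClosed C) => hC.measurableSet).trans ?_
  rw [hgen]
  exact MeasurableSpace.cardinal_measurableSet_le_continuum (hb.le_aleph0.trans aleph0_le_continuum)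

theorem dense_compl_of_countable [BaireSpace P] [PerfectSpace P] [T1Space P] (hD : D.Countable) :
    Dense Dᶜ := by
  have h := dense_biInter_of_isOpen (fun y _ => isOpen_compl_singleton) hD
    fun y _ => dense_compl_singleton y
  rwa [← compl_iUnion₂, biUnion_of_singleton] at h

theorem not_countable_of_mem_nhds [BaireSpace P] [PerfectSpace P] [T1Space P] {x : P}
    (hC : C ∈ 𝓝 x) : ¬ C.Countable := fun hcount =>
  have ⟨_, hy, hy'⟩ := (dense_compl_of_countable hcount).inter_nhds_nonempty hC
  hy hy'

theorem MeetsUncountableClosed.dense [RegularSpace P] [BaireSpace P] [PerfectSpace P] [T1Space P]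
    (hL : MeetsUncountableClosed L) : Dense L := fun x => mem_closure_iff_nhds.2 fun N hN => by
  obtain ⟨C, hC, hCclosed, hCN⟩ := exists_mem_nhds_isClosed_subset hN
  obtain ⟨y, hyL, hyC⟩ := hL C hCclosed (not_countable_of_mem_nhds hC)
  exact ⟨y, hCN hyC, hyL⟩

theorem continuum_le_mk_of_isClosed_of_not_countable [PolishSpace P] (hC : IsClosed C)
    (hC' : ¬ C.Countable) : 𝔠 ≤ #C := by
  obtain ⟨f, hfC, -, hf⟩ := hC.exists_nat_bool_injection_of_not_countable hC'
  have f_mem (a : ℕ → Bool) : f a ∈ C := hfC (mem_range_self a)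
  simpa using lift_mk_le_lift_mk_of_injective ((injective_codRestrict f_mem).2 hf)

/-- The homeomorphism `(ℕ → Bool) ≃ₜ (ℕ → Bool) × (ℕ → Bool)` partitions the Cantor space into
continuum many Cantor sets. -/
def cantorProdCantor : (ℕ → Bool) × (ℕ → Bool) ≃ₜ (ℕ → Bool) :=
  Homeomorph.sumArrowHomeomorphProdArrow.symm.trans
    (Homeomorph.piCongrLeft (Y := fun _ => Bool) Equiv.natSumNatEquivNat)

theorem MeetsUncountableClosed.continuum_le_mk_inter [PolishSpace P]
    (hL : MeetsUncountableClosed L) (hC : IsClosed C) (hC' : ¬ C.Countable) :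
    𝔠 ≤ #(L ∩ C : Set P) := by
  obtain ⟨f, hfC, hf, hf_inj⟩ := hC.exists_nat_bool_injection_of_not_countable hC'
  let slice (a : ℕ → Bool) : Set P := range fun b => f (cantorProdCantor (a, b))
  have slice_meets (a : ℕ → Bool) : (L ∩ slice a).Nonempty := by
    have slice_inj : Function.Injective fun b => f (cantorProdCantor (a, b)) := fun b b' h =>
      congrArg Prod.snd (cantorProdCantor.injective (hf_inj h))
    refine hL _ (isCompact_range (by fun_prop)).isClosed fun hcount => ?_
    have : Uncountable (ℕ → Bool) := aleph0_lt_mk_iff.1 (by simp [aleph0_lt_continuum])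
    exact not_countable_univ <|
      MapsTo.countable_of_injOn (fun b _ => mem_range_self b) slice_inj.injOn hcount
  choose x hxL b hxb using slice_meets
  have x_inj : Function.Injective x := fun a a' h => by
    rw [← hxb a, ← hxb a'] at h
    exact congrArg Prod.fst (cantorProdCantor.injective (hf_inj h))
  have x_mem (a : ℕ → Bool) : x a ∈ L ∩ C := ⟨hxL a, hxb a ▸ hfC (mem_range_self _)⟩
  simpa using lift_mk_le_lift_mk_of_injective ((injective_codRestrict x_mem).2 x_inj)

theorem MeetsUncountableClosed.isPreconnected {E : Type*} [AddCommGroup E] [Module ℝ E]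
    [TopologicalSpace E] [ContinuousAdd E] [ContinuousSMul ℝ E] [PolishSpace E] {L : Set E}
    (hE : 1 < Module.rank ℝ E) (hL : MeetsUncountableClosed L) : IsPreconnected L := by
  have : Nontrivial E := rank_pos_iff_nontrivial.1 (zero_lt_one.trans hE)
  have : PerfectSpace E := perfectSpace_of_module ℝ E
  intro U V hU hV hcov ⟨a, _, haU⟩ ⟨b, _, hbV⟩
  have hcount : (U ∪ V)ᶜ.Countable := not_not.1 fun h =>
    have ⟨_, hxL, hx⟩ := hL _ (hU.union hV).isClosed_compl h
    hx (hcov hxL)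
  have hconn := (hcount.isPathConnected_compl_of_one_lt_rank hE).isConnected.isPreconnected
  rw [compl_compl] at hconn
  obtain ⟨x, -, hx⟩ := hconn U V hU hV subset_rfl ⟨a, Or.inl haU, haU⟩ ⟨b, Or.inr hbV, hbV⟩
  exact hL.dense.inter_nhds_nonempty ((hU.inter hV).mem_nhds hx)

theorem eq_of_mem_closure_image_graph {X Y Z : Type*} [TopologicalSpace X] [TopologicalSpace Y]
    [TopologicalSpace Z] [T2Space Z] {i : X → Y} (hi : IsInducing i) {f : X → Z} {S : Set X}
    (hf : ContinuousOn f S) {x : X} (hx : x ∈ S) {y : Z}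
    (h : (i x, y) ∈ closure ((fun x => (i x, f x)) '' S)) : y = f x := by
  by_contra hne
  obtain ⟨A, B, hA, hB, hAB⟩ := t2_separation_nhds hne
  obtain ⟨N, hN, hNB⟩ := mem_nhdsWithin_iff_exists_mem_nhds_inter.1 (hf x hx hB)
  rw [hi.nhds_eq_comap, mem_comap] at hN
  obtain ⟨O, hO, hON⟩ := hN
  obtain ⟨_, ⟨hxO, hxA⟩, x', hx'S, rfl⟩ := mem_closure_iff_nhds.1 h _ (prod_mem_nhds hO hA)
  exact hAB.notMem_of_mem_left hxA (hNB ⟨hON hxO, hx'S⟩)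

/-- The closure of the graph of `p` over the points of `K` in `C`. -/
def closedGraph {K : Set P} (p : K → K) (C : Set P) : Set (P × P) :=
  closure ((fun x : K => ((x : P), (p x : P))) '' {x | ↑x ∈ C})

section ClosedGraph

variable {K : Set P} {p : K → K}

theorem mk_mem_closedGraph {x : K} (hx : ↑x ∈ C) : (↑x, ↑(p x)) ∈ closedGraph p C :=
  subset_closure (mem_image_of_mem _ hx)

theorem fst_mem_of_mem_closedGraph (hC : IsClosed C) {z : P × P} (hz : z ∈ closedGraph p C) :
    z.1 ∈ C :=
  closure_minimal (image_subset_iff.2 fun _ hx => hx) (hC.preimage continuous_fst) hz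

theorem eq_of_mem_closedGraph [T2Space P] (hp : ContinuousOn p {x | ↑x ∈ C}) {x : K} (hx : ↑x ∈ C)
    {y : P} (h : (↑x, y) ∈ closedGraph p C) : y = p x :=
  eq_of_mem_closure_image_graph IsInducing.subtypeVal
    (continuous_subtype_val.comp_continuousOn hp) hx h

theorem isUnavoidable_univalentPart_closedGraph [T2Space P] (hp : ContinuousOn p {x | ↑x ∈ C})
    (hp_inj : InjOn p {x | ↑x ∈ C}) (hp_ne : ∀ x : K, ↑x ∈ C → p x ≠ x)
    (hC : 𝔠 ≤ #(K ∩ C : Set P)) :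
    IsUnavoidable 𝔠 (univalentPart (closedGraph p C)) := fun F hF => by
  rw [show #(K ∩ C : Set P) = #{x : K | ↑x ∈ C} from mk_sep K (· ∈ C)] at hC
  obtain ⟨x, hxC, hxF, hpxF⟩ := exists_mem_notMem_notMem_of_injOn
    Subtype.val_injective.injOn (Subtype.val_injective.comp_injOn hp_inj)
    (aleph0_le_continuum.trans hC) (hF.trans_le hC)
  exact ⟨(x, p x), ⟨mk_mem_closedGraph hxC, fun y hy => eq_of_mem_closedGraph hp hxC hy⟩,
    hxF, hpxF, fun h => hp_ne x hxC (Subtype.ext h.symm)⟩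

theorem locallyRigid_of_forall_isClosed [PolishSpace P] [PerfectSpace P] (hLK : L ⊆ K)
    (hL : MeetsUncountableClosed L)
    (h : ∀ Z, IsClosed Z → IsUnavoidable 𝔠 (univalentPart Z) →
      ∃ z ∈ univalentPart Z, z.1 ∈ L ∧ z.2 ∉ K) :
    LocallyRigid K := fun U p hU hp hp_inj x₀ hx₀ => by
  by_contra hne
  have hU' : {x ∈ U | p x ≠ x} ∈ 𝓝 x₀ :=
    inter_mem (hU.mem_nhds hx₀)
      (((hp.continuousAt (hU.mem_nhds hx₀)).ne_iff_eventually_ne continuousAt_id).1 hne)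
  obtain ⟨N, hN, hNU⟩ := (mem_nhds_subtype _ _ _).1 hU'
  obtain ⟨C, hC, hCclosed, hCN⟩ := exists_mem_nhds_isClosed_subset hN
  have hCU (x : K) (hx : ↑x ∈ C) : x ∈ U ∧ p x ≠ x := hNU (hCN hx)
  have hKC : 𝔠 ≤ #(K ∩ C : Set P) :=
    (hL.continuum_le_mk_inter hCclosed (not_countable_of_mem_nhds hC)).trans <|
      mk_le_mk_of_subset (inter_subset_inter_left _ hLK)
  obtain ⟨z, ⟨hz, hz_unique⟩, hzL, hzK⟩ := h (closedGraph p C) isClosed_closure <|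
    isUnavoidable_univalentPart_closedGraph (hp.mono fun x hx => (hCU x hx).1)
      (hp_inj.mono fun x hx => (hCU x hx).1) (fun x hx => (hCU x hx).2) hKC
  let x : K := ⟨z.1, hLK hzL⟩
  have hpx : ↑(p x) = z.2 :=
    hz_unique _ (mk_mem_closedGraph (x := x) (fst_mem_of_mem_closedGraph hCclosed hz))
  exact hzK (hpx ▸ (p x).2)

end ClosedGraph

theorem exists_locallyRigid_union [PolishSpace P] [PerfectSpace P] (hD : #D < 𝔠) :
    ∃ L : Set P, Disjoint L D ∧ MeetsUncountableClosed L ∧ LocallyRigid ↥(L ∪ D) := by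
  let W : {C : Set P // IsClosed C} ⊕ {Z : Set (P × P) // IsClosed Z} → Set (P × P) :=
    Sum.elim (fun C => C.1 ×ˢ Set.univ) (fun Z => univalentPart Z.1)
  obtain ⟨L, hLD, hL⟩ := exists_disjoint_forall_isUnavoidable aleph0_le_continuum (by
    rw [mk_sum, lift_id, lift_id]
    exact add_le_of_le aleph0_le_continuum mk_isClosed_le_continuum mk_isClosed_le_continuum) W hD
  have meets : MeetsUncountableClosed L := fun C hC hC' => by
    obtain ⟨z, hzC, hzL, -⟩ := hL (Sum.inl ⟨C, hC⟩) <|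
      isUnavoidable_prod_univ aleph0_le_continuum
        (continuum_le_mk_of_isClosed_of_not_countable hC hC')
    exact ⟨z.1, hzL, hzC.1⟩
  exact ⟨L, hLD, meets, locallyRigid_of_forall_isClosed subset_union_left meets
    fun Z hZ hZ' => hL (Sum.inr ⟨Z, hZ⟩) hZ'⟩

end LocallyRigid

/-! ### Gluing copies of a metric space -/

/-- Data for gluing copies of a metric space `K`, indexed by `E`. Each `j : ι` contributes an
equivalence relation on the set of copies and a weight on `K`; the points over `k` in two copies
are identified when the copies are equivalent for every `j` whose weight is nonzero at `k`. -/
structure GluingData (ι E K : Type*) [MetricSpace K] where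
  weight : ι → K → ℝ
  lipschitz (j : ι) : LipschitzWith 1 (weight j)
  weight_mem (j : ι) (k : K) : weight j k ∈ Icc 0 1
  rel : ι → Setoid E
  covered (k : K) : ∃ j, 0 < weight j k

namespace GluingData

variable {ι E K : Type*} [MetricSpace K] (G : GluingData ι E K) {A B : Set E}

open Classical in
/-- The coordinates of the point over `k` in the copy `e`: for each `j` and each copy `c`, the
weight of `j` at `k` if `e` and `c` are equivalent for `j`, and `0` otherwise. -/
noncomputable def coord (k : K) (e : E) : lp (fun _ : ι × E => ℝ) ∞ :=
  ⟨fun c => if G.rel c.1 e c.2 then G.weight c.1 k else 0, by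
    refine memℓp_infty ⟨1, ?_⟩
    rintro _ ⟨c, rfl⟩
    have h := G.weight_mem c.1 k
    dsimp only
    split_ifs
    · exact abs_le.2 ⟨by linarith [h.1], h.2⟩
    · simp⟩

theorem coord_of_rel {j : ι} {e e' : E} (h : G.rel j e e') (k : K) :
    G.coord k e (j, e') = G.weight j k :=
  if_pos h

theorem coord_of_not_rel {j : ι} {e e' : E} (h : ¬ G.rel j e e') (k : K) :
    G.coord k e (j, e') = 0 :=
  if_neg h

/-- The glued space, realized as a subspace of `K × ℓ^∞(ι × E)`; this makes it metrizable. -/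
def Space : Type _ :=
  range fun x : K × E => (x.1, G.coord x.1 x.2)

noncomputable instance : MetricSpace G.Space :=
  inferInstanceAs (MetricSpace (range fun x : K × E => (x.1, G.coord x.1 x.2)))

variable {G} in
/-- The projection of the glued space to `K`. -/
def base (x : G.Space) : K := x.1.1

/-- The point over `k` in the copy `e`. -/
noncomputable def point (k : K) (e : E) : G.Space := ⟨(k, G.coord k e), mem_range_self (k, e)⟩

theorem exists_eq_point (x : G.Space) : ∃ k e, x = G.point k e := by
  obtain ⟨_, ⟨k, e⟩, rfl⟩ := x
  exact ⟨k, e, rfl⟩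

theorem continuous_base : Continuous (base : G.Space → K) :=
  continuous_fst.comp continuous_subtype_val

theorem dist_point (k k' : K) (e e' : E) :
    dist (G.point k e) (G.point k' e') = max (dist k k') ‖G.coord k e - G.coord k' e'‖ := by
  rw [← dist_eq_norm]
  rfl

theorem abs_weight_sub_le (j : ι) (k k' : K) : |G.weight j k - G.weight j k'| ≤ dist k k' := by
  simpa [Real.dist_eq] using (G.lipschitz j).dist_le_mul k k'

theorem weight_le_dist_point {j : ι} {k k' : K} {e e' : E} (h : ¬ G.rel j e e') :
    G.weight j k ≤ dist (G.point k e) (G.point k' e') := by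
  have hcoord : (G.coord k e - G.coord k' e') (j, e) = G.weight j k := by
    rw [lp.coeFn_sub, Pi.sub_apply, G.coord_of_rel (Setoid.refl' _ e),
      G.coord_of_not_rel fun h' => h (Setoid.symm' _ h'), sub_zero]
  calc G.weight j k ≤ ‖(G.coord k e - G.coord k' e') (j, e)‖ := hcoord ▸ le_abs_self _
    _ ≤ ‖G.coord k e - G.coord k' e'‖ := lp.norm_apply_le_norm ENNReal.top_ne_zero _ _
    _ ≤ dist (G.point k e) (G.point k' e') := G.dist_point .. ▸ le_max_right _ _

theorem dist_point_le {k k' : K} {e e' : E} {C : ℝ} (hdist : dist k k' ≤ C)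
    (h : ∀ j, ¬ G.rel j e e' → G.weight j k ≤ C ∧ G.weight j k' ≤ C) :
    dist (G.point k e) (G.point k' e') ≤ C := by
  refine G.dist_point .. ▸ max_le hdist (lp.norm_le_of_forall_le (dist_nonneg.trans hdist) ?_)
  rintro ⟨j, c⟩
  have weight_abs (k : K) : |G.weight j k| = G.weight j k := abs_of_nonneg (G.weight_mem j k).1
  rw [lp.coeFn_sub, Pi.sub_apply, Real.norm_eq_abs]
  by_cases hc : G.rel j e c <;> by_cases hc' : G.rel j e' c
  · rw [G.coord_of_rel hc, G.coord_of_rel hc']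
    exact (G.abs_weight_sub_le j k k').trans hdist
  · have hee' : ¬ G.rel j e e' := fun h => hc' (Setoid.trans' _ (Setoid.symm' _ h) hc)
    rw [G.coord_of_rel hc, G.coord_of_not_rel hc', sub_zero, weight_abs]
    exact (h j hee').1
  · have hee' : ¬ G.rel j e e' := fun h => hc (Setoid.trans' _ h hc')
    rw [G.coord_of_not_rel hc, G.coord_of_rel hc', zero_sub, abs_neg, weight_abs]
    exact (h j hee').2
  · rw [G.coord_of_not_rel hc, G.coord_of_not_rel hc', sub_zero, abs_zero]
    exact dist_nonneg.trans hdist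

theorem continuous_point (e : E) : Continuous fun k => G.point k e :=
  (LipschitzWith.mk_one fun _ _ =>
    G.dist_point_le le_rfl fun j h => absurd (Setoid.refl' (G.rel j) e) h).continuous

theorem point_eq_point_iff {k k' : K} {e e' : E} :
    G.point k e = G.point k' e' ↔ k = k' ∧ ∀ j, 0 < G.weight j k → G.rel j e e' := by
  refine ⟨fun h => ⟨congrArg base h, fun j hj => ?_⟩, ?_⟩
  · by_contra hrel
    exact (G.weight_le_dist_point hrel).not_gt (dist_eq_zero.2 h ▸ hj)
  · rintro ⟨rfl, h⟩
    have weight_le {j : ι} (hj : ¬ G.rel j e e') : G.weight j k ≤ 0 := not_lt.1 (mt (h j) hj)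
    exact dist_le_zero.1 <|
      G.dist_point_le (dist_self k).le fun j hj => ⟨weight_le hj, weight_le hj⟩

/-- The points of the glued space lying in a copy equivalent to `e` for `j`, at positive weight. -/
def star (j : ι) (e : E) : Set G.Space := {x | 0 < x.1.2 (j, e)}

theorem isOpen_star (j : ι) (e : E) : IsOpen (G.star j e) :=
  isOpen_lt continuous_const <|
    ((continuous_apply (j, e)).comp lp.uniformContinuous_coe.continuous).comp
      (continuous_snd.comp continuous_subtype_val)

theorem point_mem_star_iff {j : ι} {k : K} {e e' : E} :
    G.point k e ∈ G.star j e' ↔ 0 < G.weight j k ∧ G.rel j e e' := by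
  change 0 < G.coord k e (j, e') ↔ _
  by_cases h : G.rel j e e'
  · rw [G.coord_of_rel h]; exact (and_iff_left h).symm
  · rw [G.coord_of_not_rel h]; exact iff_of_false (lt_irrefl _) fun h' => h h'.2

/-- The union of the copies in `A`. -/
def piece (A : Set E) : Set G.Space := {x | ∃ k, ∃ e ∈ A, x = G.point k e}

/-- A set of copies that is closed under all the equivalence relations. -/
def IsSaturated (A : Set E) : Prop := ∀ ⦃j e e'⦄, G.rel j e e' → e ∈ A → e' ∈ A

variable {G}

theorem IsSaturated.compl (hA : G.IsSaturated A) : G.IsSaturated Aᶜ :=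
  fun _ _ _ h he he' => he (hA (Setoid.symm' _ h) he')

theorem IsSaturated.isOpen_piece (hA : G.IsSaturated A) : IsOpen (G.piece A) := by
  have hstar : G.piece A = ⋃ (j) (e ∈ A), G.star j e := by
    ext x
    obtain ⟨k, e, rfl⟩ := G.exists_eq_point x
    simp only [mem_iUnion, G.point_mem_star_iff]
    constructor
    · rintro ⟨k', e', he', h⟩
      obtain ⟨j, hj⟩ := G.covered k
      exact ⟨j, e', he', hj, (G.point_eq_point_iff.1 h).2 j hj⟩
    · rintro ⟨j, e', he', -, h⟩
      exact ⟨k, e, hA (Setoid.symm' _ h) he', rfl⟩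
  rw [hstar]
  exact isOpen_iUnion fun j => isOpen_biUnion fun e _ => G.isOpen_star j e

theorem IsSaturated.compl_piece (hA : G.IsSaturated A) : (G.piece A)ᶜ = G.piece Aᶜ := by
  ext x
  obtain ⟨k, e, rfl⟩ := G.exists_eq_point x
  refine ⟨fun h => ⟨k, e, fun he => h ⟨k, e, he, rfl⟩, rfl⟩, ?_⟩
  rintro ⟨k', e', he', h'⟩ ⟨k'', e'', he'', h''⟩
  obtain ⟨rfl, h⟩ := G.point_eq_point_iff.1 (h'.symm.trans h'')
  obtain ⟨j, hj⟩ := G.covered k'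
  exact he' (hA (Setoid.symm' _ (h j hj)) he'')

theorem IsSaturated.isClopen_piece (hA : G.IsSaturated A) : IsClopen (G.piece A) :=
  ⟨isOpen_compl_iff.1 (hA.compl_piece ▸ hA.compl.isOpen_piece), hA.isOpen_piece⟩

variable {τ : E → E} (hτ : ∀ j e e', G.rel j (τ e) (τ e') ↔ G.rel j e e')
include hτ

theorem dist_point_map_le (k k' : K) (e e' : E) :
    dist (G.point k (τ e)) (G.point k' (τ e')) ≤ dist (G.point k e) (G.point k' e') := by
  refine G.dist_point_le (G.dist_point .. ▸ le_max_left _ _) fun j hj => ?_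
  rw [hτ] at hj
  refine ⟨G.weight_le_dist_point hj, ?_⟩
  rw [dist_comm]
  exact G.weight_le_dist_point fun h => hj (Setoid.symm' _ h)

theorem existsInjCont_piece (hAB : MapsTo τ A B) : ExistsInjCont (G.piece A) (G.piece B) := by
  choose k e he hke using fun x : G.piece A => x.2
  refine ⟨fun x => ⟨G.point (k x) (τ (e x)), k x, τ (e x), hAB (he x), rfl⟩, ?_, fun x y h => ?_⟩
  · refine (LipschitzWith.mk_one fun x y => ?_).continuous
    rw [Subtype.dist_eq, Subtype.dist_eq x y, hke x, hke y]
    exact dist_point_map_le hτ _ _ _ _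
  · have h' := G.point_eq_point_iff.1 (congrArg Subtype.val h)
    simp only [hτ] at h'
    exact Subtype.ext ((hke x).trans ((G.point_eq_point_iff.2 h').trans (hke y).symm))

end GluingData

/-! ### Gluing along the marked points of a rigid space -/

section Marked

variable {J E K : Type*} [MetricSpace K] {z : J → K}

theorem isClosed_range_of_one_le_dist (hz : Pairwise fun i j => 1 ≤ dist (z i) (z j)) :
    IsClosed (range z) :=
  Metric.isClosed_of_pairwise_le_dist zero_lt_one <| by
    rintro _ ⟨i, rfl⟩ _ ⟨j, rfl⟩ hne
    exact hz (ne_of_apply_ne z hne)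

variable [Nonempty J]

theorem infDist_range_pos_iff (hz : Pairwise fun i j => 1 ≤ dist (z i) (z j)) {k : K} :
    0 < Metric.infDist k (range z) ↔ k ∉ range z :=
  ((isClosed_range_of_one_le_dist hz).notMem_iff_infDist_pos (range_nonempty z)).symm

/-- Glue copies of `K` at the marked points `z j`: two copies share their point over `z j` when
they are equivalent for `r j`, and distinct copies share no unmarked point. -/
noncomputable def markedGluing (hz : Pairwise fun i j => 1 ≤ dist (z i) (z j))
    (r : J → Setoid E) : GluingData (Option J) E K where
  weight
    | none => fun k => min 1 (Metric.infDist k (range z))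
    | some j => fun k => max 0 (1 - dist k (z j))
  lipschitz
    | none => (Metric.lipschitz_infDist_pt _).const_min 1
    | some j => LipschitzWith.const_max (LipschitzWith.mk_one fun k k' => by
        rw [Real.dist_eq, sub_sub_sub_cancel_left, abs_sub_comm]
        exact abs_dist_sub_le _ _ _) 0
  weight_mem
    | none, k => ⟨le_min zero_le_one Metric.infDist_nonneg, min_le_left _ _⟩
    | some j, k => ⟨le_max_left _ _, max_le zero_le_one (sub_le_self _ dist_nonneg)⟩
  rel
    | none => ⊥
    | some j => r j
  covered k := by
    by_cases hk : k ∈ range z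
    · obtain ⟨j, rfl⟩ := hk
      exact ⟨some j, by simp⟩
    · exact ⟨none, lt_min zero_lt_one ((infDist_range_pos_iff hz).2 hk)⟩

namespace markedGluing

variable (hz : Pairwise fun i j => 1 ≤ dist (z i) (z j)) (r : J → Setoid E)

theorem weight_none_pos_iff {k : K} : 0 < (markedGluing hz r).weight none k ↔ k ∉ range z :=
  lt_min_iff.trans ((and_iff_right zero_lt_one).trans (infDist_range_pos_iff hz))

theorem weight_some_pos_iff {i j : J} :
    0 < (markedGluing hz r).weight (some j) (z i) ↔ i = j := by
  have h : 0 < (markedGluing hz r).weight (some j) (z i) ↔ dist (z i) (z j) < 1 :=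
    lt_max_iff.trans ((or_iff_right (lt_irrefl 0)).trans sub_pos)
  rw [h]
  refine ⟨fun hlt => ?_, fun hij => ?_⟩
  · by_contra hij
    exact (hz hij).not_gt hlt
  · rw [hij, dist_self]
    exact zero_lt_one

theorem point_unmarked_eq_iff {k k' : K} (hk : k ∉ range z) {e e' : E} :
    (markedGluing hz r).point k e = (markedGluing hz r).point k' e' ↔ k = k' ∧ e = e' := by
  refine ⟨fun h => ?_, by rintro ⟨rfl, rfl⟩; rfl⟩
  rw [GluingData.point_eq_point_iff] at h
  exact ⟨h.1, h.2 none ((weight_none_pos_iff hz r).2 hk)⟩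

theorem point_marked_eq_iff {j : J} {e e' : E} :
    (markedGluing hz r).point (z j) e = (markedGluing hz r).point (z j) e' ↔ r j e e' := by
  rw [GluingData.point_eq_point_iff, and_iff_right rfl]
  refine ⟨fun h => h (some j) ((weight_some_pos_iff hz r).2 rfl), ?_⟩
  rintro h (_ | i) hpos
  · exact absurd (mem_range_self j) ((weight_none_pos_iff hz r).1 hpos)
  · rw [weight_some_pos_iff] at hpos
    exact hpos ▸ h

theorem point_mem_star_none_iff {k : K} {e e' : E} :
    (markedGluing hz r).point k e ∈ (markedGluing hz r).star none e' ↔ k ∉ range z ∧ e = e' := by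
  rw [GluingData.point_mem_star_iff, weight_none_pos_iff]
  rfl

theorem point_marked_mem_star_some_iff {i j : J} {e e' : E} :
    (markedGluing hz r).point (z i) e ∈ (markedGluing hz r).star (some j) e' ↔
      i = j ∧ r j e e' := by
  rw [GluingData.point_mem_star_iff, weight_some_pos_iff]
  rfl

end markedGluing

/-- Marked points `z j` in a locally rigid space, at mutual distance at least `1` and with dense
preconnected complement. -/
structure IsRigidMarking (z : J → K) : Prop where
  one_le_dist : Pairwise fun i j => 1 ≤ dist (z i) (z j)
  locallyRigid : LocallyRigid K
  dense : Dense (range z)ᶜ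
  isPreconnected : IsPreconnected (range z)ᶜ

namespace IsRigidMarking

variable (hz : IsRigidMarking z)
include hz

theorem nonempty_compl_range : (range z)ᶜ.Nonempty :=
  have : Nonempty K := .map z ‹_›
  hz.dense.nonempty

theorem perfectSpace : PerfectSpace K := by
  obtain ⟨j⟩ := ‹Nonempty J›
  obtain ⟨k, hk⟩ := hz.nonempty_compl_range
  have : Nontrivial K := ⟨k, z j, fun h => hk (h ▸ mem_range_self j)⟩
  have : ConnectedSpace K :=
    { toNonempty := ⟨k⟩
      isPreconnected_univ := hz.dense.closure_eq ▸ hz.isPreconnected.closure }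
  infer_instance

/-- Copies of `K` glued at the marked points `z j` along the equivalence relations `r j`. -/
noncomputable abbrev gluing (r : J → Setoid E) : GluingData (Option J) E K :=
  markedGluing hz.one_le_dist r

open GluingData

variable {r : J → Setoid E}

section Copy

variable {g : K → (hz.gluing r).Space} (hg : Continuous g)
  (hg_inj : Function.Injective g)
include hg hg_inj

theorem base_eq_of_base_notMem {k : K} (hk : base (g k) ∉ range z) : base (g k) = k := by
  obtain ⟨k', e, hgk⟩ := (hz.gluing r).exists_eq_point (g k)
  rw [hgk] at hk
  let U := g ⁻¹' (hz.gluing r).star none e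
  have eq_point {x : K} (hx : x ∈ U) : g x = (hz.gluing r).point (base (g x)) e := by
    obtain ⟨k', e', hgx⟩ := (hz.gluing r).exists_eq_point (g x)
    rw [mem_preimage, hgx, markedGluing.point_mem_star_none_iff] at hx
    rw [hgx, hx.2]
    rfl
  have hinj : InjOn (fun x => base (g x)) U := fun x hx y hy h => hg_inj <| by
    rw [eq_point hx, eq_point hy]
    exact congrArg (fun k => (hz.gluing r).point k e) h
  refine hz.locallyRigid U _ ((isOpen_star _ _ _).preimage hg)
    ((continuous_base _).comp hg).continuousOn hinj ?_
  rw [mem_preimage, hgk, markedGluing.point_mem_star_none_iff]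
  exact ⟨hk, rfl⟩

theorem base_eq (k : K) : base (g k) = k := by
  have := hz.perfectSpace
  by_contra hne
  obtain ⟨j, hj⟩ : base (g k) ∈ range z :=
    not_not.1 fun h => hne (hz.base_eq_of_base_notMem hg hg_inj h)
  obtain ⟨k', e, hgk⟩ := (hz.gluing r).exists_eq_point (g k)
  obtain rfl : z j = k' := by rw [hj, hgk]; rfl
  let V := {x | g x ∈ (hz.gluing r).star (some j) e ∧ base (g x) ≠ x}
  have hV : IsOpen V := ((isOpen_star _ _ _).preimage hg).inter
    (isOpen_ne_fun ((continuous_base _).comp hg) continuous_id)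
  have hkV : k ∈ V := by
    refine ⟨?_, hne⟩
    rw [hgk, markedGluing.point_marked_mem_star_some_iff]
    exact ⟨rfl, Setoid.refl' _ e⟩
  have hV_subset : V ⊆ {k} := fun x ⟨hx, hx_ne⟩ => hg_inj <| by
    obtain ⟨i, hi⟩ : base (g x) ∈ range z :=
      not_not.1 fun h => hx_ne (hz.base_eq_of_base_notMem hg hg_inj h)
    obtain ⟨k', e', hgx⟩ := (hz.gluing r).exists_eq_point (g x)
    obtain rfl : z i = k' := by rw [hi, hgx]; rfl
    rw [hgx, markedGluing.point_marked_mem_star_some_iff] at hx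
    rw [hgx, hgk, hx.1, markedGluing.point_marked_eq_iff]
    exact hx.2
  have hV_eq : V = {k} := hV_subset.antisymm (singleton_subset_iff.2 hkV)
  exact not_isOpen_singleton k (hV_eq ▸ hV)

theorem exists_forall_eq_point : ∃ e, ∀ k, g k = (hz.gluing r).point k e := by
  have base_eq := hz.base_eq hg hg_inj
  have exists_copy (k : K) : ∃ e, g k = (hz.gluing r).point k e := by
    obtain ⟨k', e, hgk⟩ := (hz.gluing r).exists_eq_point (g k)
    obtain rfl : k = k' := by rw [← base_eq k, hgk]; rfl
    exact ⟨e, hgk⟩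
  choose e he using exists_copy
  have mem_star_iff {k : K} (hk : k ∉ range z) {e' : E} :
      g k ∈ (hz.gluing r).star none e' ↔ e k = e' := by
    rw [he, markedGluing.point_mem_star_none_iff, and_iff_right hk]
  obtain ⟨k₀, hk₀⟩ := hz.nonempty_compl_range
  have hsub : (range z)ᶜ ⊆ g ⁻¹' (hz.gluing r).star none (e k₀) := by
    refine hz.isPreconnected.subset_left_of_subset_union ((isOpen_star _ _ _).preimage hg)
      (isOpen_iUnion fun e' => isOpen_iUnion fun _ : e' ≠ e k₀ =>
        (isOpen_star _ none e').preimage hg) ?_ (fun k hk => ?_) ⟨k₀, hk₀, (mem_star_iff hk₀).2 rfl⟩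
    · simp only [disjoint_left, mem_iUnion, not_exists, mem_preimage, he,
        markedGluing.point_mem_star_none_iff]
      exact fun k hk e' he' hk' => he' (hk'.2.symm.trans hk.2)
    · by_cases h : e k = e k₀
      · exact .inl ((mem_star_iff hk).2 h)
      · exact .inr (mem_biUnion h ((mem_star_iff hk).2 rfl))
  refine ⟨e k₀, congrFun <| Continuous.ext_on hz.dense hg (continuous_point _ _) ?_⟩
  intro k hk
  rw [he, (mem_star_iff hk).1 (hsub hk)]

end Copy

theorem exists_hom_of_injective {A B : Set E} {F : (hz.gluing r).piece A → (hz.gluing r).piece B}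
    (hF : Continuous F) (hF_inj : Function.Injective F) :
    ∃ φ : A → B, Function.Injective φ ∧
      (∀ j (a a' : A), r j a a' → r j (φ a) (φ a')) ∧
      ∀ (a : A) (k : K) (h : (hz.gluing r).point k a ∈ (hz.gluing r).piece A),
        (F ⟨_, h⟩ : (hz.gluing r).Space) = (hz.gluing r).point k (φ a) := by
  have mem_piece (a : A) (k : K) : (hz.gluing r).point k a ∈ (hz.gluing r).piece A :=
    ⟨k, a, a.2, rfl⟩
  have exists_copy (a : A) : ∃ e, ∀ k, (F ⟨_, mem_piece a k⟩ : (hz.gluing r).Space) =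
      (hz.gluing r).point k e := by
    refine hz.exists_forall_eq_point (continuous_subtype_val.comp <|
      hF.comp ((continuous_point _ _).subtype_mk _)) fun k k' h => ?_
    have h' := congrArg Subtype.val (hF_inj (Subtype.val_injective h))
    exact ((point_eq_point_iff _).1 h').1
  choose e he using exists_copy
  obtain ⟨k₀, hk₀⟩ := hz.nonempty_compl_range
  have e_mem (a : A) : e a ∈ B := by
    obtain ⟨k, b, hb, h⟩ := (F ⟨_, mem_piece a k₀⟩).2
    rw [he, markedGluing.point_unmarked_eq_iff _ _ hk₀] at h
    exact h.2 ▸ hb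
  have F_eq_iff (a a' : A) (k : K) : (hz.gluing r).point k (e a) = (hz.gluing r).point k (e a') ↔
      (hz.gluing r).point k a = (hz.gluing r).point k a' := by
    rw [← he, ← he, Subtype.val_inj, hF_inj.eq_iff, Subtype.mk.injEq]
  refine ⟨fun a => ⟨e a, e_mem a⟩, fun a a' h => ?_, fun j a a' h => ?_, fun a k _ => he a k⟩
  · have h' := (F_eq_iff a a' k₀).1 (congrArg _ (Subtype.mk.inj h))
    exact Subtype.ext ((markedGluing.point_unmarked_eq_iff _ _ hk₀).1 h').2
  · rw [← markedGluing.point_marked_eq_iff hz.one_le_dist] at h ⊢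
    exact (F_eq_iff a a' (z j)).2 h

end IsRigidMarking

end Marked

theorem exists_isRigidMarking :
    ∃ (K : Type) (_ : MetricSpace K) (z : ℕ → K), IsRigidMarking z ∧ #K ≤ 𝔠 := by
  let D : Set (ℝ × ℝ) := range fun n : ℕ => ((n : ℝ), (0 : ℝ))
  obtain ⟨L, hLD, hL, hrigid⟩ :=
    exists_locallyRigid_union ((countable_range _ : D.Countable).le_aleph0.trans_lt
      aleph0_lt_continuum)
  let z (n : ℕ) : ↥(L ∪ D) := ⟨((n : ℝ), 0), .inr (mem_range_self n)⟩
  have compl_range : (range z)ᶜ = (↑) ⁻¹' L := by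
    ext ⟨x, hx⟩
    have hxD : ⟨x, hx⟩ ∈ range z ↔ x ∈ D := exists_congr fun _ => Subtype.ext_iff
    rw [mem_compl_iff, hxD]
    exact ⟨hx.resolve_right, fun hxL => disjoint_left.1 hLD hxL⟩
  have image_compl_range : (↑) '' (range z)ᶜ = L := by
    rw [compl_range, Subtype.image_preimage_coe]
    exact inter_eq_right.2 subset_union_left
  have rank_plane : 1 < Module.rank ℝ (ℝ × ℝ) := by
    rw [rank_prod', Module.rank_self, one_add_one_eq_two]
    exact Cardinal.one_lt_two
  refine ⟨↥(L ∪ D), inferInstance, z, ⟨fun m n hmn => ?_, hrigid, ?_, ?_⟩,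
    (mk_set_le _).trans (by simp [mk_real])⟩
  · exact (Nat.pairwise_one_le_dist hmn).trans (le_max_left _ _)
  · rw [Subtype.dense_iff, image_compl_range, hL.dense.closure_eq]
    exact subset_univ _
  · rw [← IsInducing.subtypeVal.isPreconnected_image, image_compl_range]
    exact hL.isPreconnected rank_plane

/-! ### Spaces of relational structures -/

section Relational

variable {W : Type u} {R : ℕ → W → W → Prop} {A B : Set W}

/-- The relations of `R` preceded by equality. -/
def withEq (R : ℕ → W → W → Prop) : ℕ → W → W → Prop
  | 0 => Eq
  | n + 1 => R n

/-- Labelled edges of the structure `R`. Each edge comes in two copies, so that gluing them along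
a marked point depending on the label makes the label visible. Label `0` is reserved for loops. -/
@[ext]
structure Edge (R : ℕ → W → W → Prop) where
  copy : Bool
  label : ℕ
  src : W
  tgt : W
  related : withEq R label src tgt

namespace Edge

variable {e e' : Edge R} {n : ℕ}

/-- The loop representing the element `x`. -/
def loop (R : ℕ → W → W → Prop) (x : W) : Edge R := ⟨false, 0, x, x, rfl⟩

/-- The other copy of an edge. -/
def twin (e : Edge R) : Edge R := { e with copy := !e.copy }

theorem twin_ne (e : Edge R) : e.twin ≠ e := fun h => Bool.not_ne_self _ (congrArg copy h)

/-- Edges are glued along their sources, along their targets, and along their labels: the two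
copies of an edge with label `n` are glued by the relation `n + 2`. -/
def glue (R : ℕ → W → W → Prop) : ℕ → Setoid (Edge R)
  | 0 => Setoid.ker src
  | 1 => Setoid.ker tgt
  | n + 2 => Setoid.ker fun e => (n == e.label || e.copy, e.label, e.src, e.tgt)

theorem glue_src_iff : glue R 0 e e' ↔ e.src = e'.src := .rfl

theorem glue_tgt_iff : glue R 1 e e' ↔ e.tgt = e'.tgt := .rfl

theorem glue_label_iff : glue R (n + 2) e e' ↔
    (n == e.label || e.copy) = (n == e'.label || e'.copy) ∧
      e.label = e'.label ∧ e.src = e'.src ∧ e.tgt = e'.tgt :=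
  Setoid.ker_def.trans (by simp only [Prod.mk.injEq])

theorem glue_twin (e : Edge R) : glue R (e.label + 2) e e.twin := by
  simp [glue_label_iff, twin]

theorem label_eq_of_glue (h : glue R (n + 2) e e') (hne : e ≠ e') : e.label = n := by
  obtain ⟨hcopy, hlabel, hsrc, htgt⟩ := glue_label_iff.1 h
  by_contra hn
  rw [beq_false_of_ne (Ne.symm hn), beq_false_of_ne (hlabel ▸ Ne.symm hn)] at hcopy
  exact hne (Edge.ext hcopy hlabel hsrc htgt)

/-- The image of an edge under a map preserving the relations. -/
def map (f : W → W) (hf : ∀ n x y, R n x y → R n (f x) (f y)) (e : Edge R) : Edge R where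
  copy := e.copy
  label := e.label
  src := f e.src
  tgt := f e.tgt
  related := by
    obtain ⟨_, _ | n, x, y, h⟩ := e
    · exact congrArg f h
    · exact hf n x y h

theorem map_injective {f : W → W} (hf : ∀ n x y, R n x y → R n (f x) (f y))
    (hf_inj : Function.Injective f) : Function.Injective (Edge.map f hf) := fun e e' h => by
  simp only [map, Edge.mk.injEq, hf_inj.eq_iff] at h
  exact Edge.ext h.1 h.2.1 h.2.2.1 h.2.2.2

theorem glue_map_iff {f : W → W} (hf : ∀ n x y, R n x y → R n (f x) (f y))
    (hf_inj : Function.Injective f) (j : ℕ) (e e' : Edge R) :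
    glue R j (e.map f hf) (e'.map f hf) ↔ glue R j e e' := by
  match j with
  | 0 | 1 => exact hf_inj.eq_iff
  | n + 2 => simp only [glue_label_iff, map, hf_inj.eq_iff]

/-- The edges with both ends in `A`. -/
def within (R : ℕ → W → W → Prop) (A : Set W) : Set (Edge R) := {e | e.src ∈ A ∧ e.tgt ∈ A}

theorem loop_mem_within {x : W} (hx : x ∈ A) : loop R x ∈ within R A := ⟨hx, hx⟩

/-- The map on elements induced by a map on edges. -/
def induced (φ : within R A → within R B) (x : A) : B :=
  ⟨_, (φ ⟨_, loop_mem_within x.2⟩).2.1⟩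

section Induced

variable {φ : within R A → within R B}
  (hφ : ∀ j (e e' : within R A), glue R j e e' → glue R j (φ e) (φ e'))
include hφ

theorem src_apply (e : within R A) : (φ e : Edge R).src = induced φ ⟨_, e.2.1⟩ :=
  hφ 0 e ⟨_, loop_mem_within e.2.1⟩ rfl

variable (hφ_inj : Function.Injective φ)
include hφ_inj

theorem label_apply (e : within R A) : (φ e : Edge R).label = (e : Edge R).label := by
  let t : within R A := ⟨twin e, e.2⟩
  refine label_eq_of_glue (hφ _ e t (glue_twin _)) fun h => ?_
  exact twin_ne (e : Edge R) (congrArg Subtype.val (hφ_inj (Subtype.ext h))).symm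

theorem tgt_apply (e : within R A) : (φ e : Edge R).tgt = induced φ ⟨_, e.2.2⟩ := by
  let l : within R A := ⟨_, loop_mem_within e.2.2⟩
  have hl := (φ l : Edge R).related
  rw [label_apply hφ hφ_inj l] at hl
  exact (hφ 1 e l rfl).trans hl.symm

theorem induced_hom {n : ℕ} {x y : A} (h : R n x y) : R n (induced φ x) (induced φ y) := by
  let e : within R A := ⟨⟨false, n + 1, x, y, h⟩, x.2, y.2⟩
  have he := (φ e : Edge R).related
  rwa [label_apply hφ hφ_inj, src_apply hφ, tgt_apply hφ hφ_inj] at he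

end Induced

end Edge

/-- A set of elements unrelated to all elements outside. -/
def IsIsolated (R : ℕ → W → W → Prop) (A : Set W) : Prop :=
  ∀ ⦃n x y⦄, R n x y → (x ∈ A ↔ y ∈ A)

theorem IsIsolated.src_mem_iff (hA : IsIsolated R A) (e : Edge R) : e.src ∈ A ↔ e.tgt ∈ A := by
  obtain ⟨_, _ | n, x, y, h⟩ := e
  · exact iff_of_eq (congrArg (· ∈ A) h)
  · exact hA h

variable {K : Type} [MetricSpace K] {z : ℕ → K} (hz : IsRigidMarking z)

namespace IsRigidMarking

/-- The space of a relational structure: copies of `K` indexed by its edges. -/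
noncomputable abbrev edgeGluing (R : ℕ → W → W → Prop) : GluingData (Option ℕ) (Edge R) K :=
  hz.gluing (Edge.glue R)

/-- The part of the space of `R` spanned by a set of elements. -/
abbrev pieceOver (R : ℕ → W → W → Prop) (A : Set W) : Set (hz.edgeGluing R).Space :=
  (hz.edgeGluing R).piece (Edge.within R A)

theorem isClopen_pieceOver (hA : IsIsolated R A) : IsClopen (hz.pieceOver R A) := by
  have mem_within_iff (e : Edge R) : e ∈ Edge.within R A ↔ e.src ∈ A :=
    and_iff_left_of_imp (hA.src_mem_iff e).1
  refine GluingData.IsSaturated.isClopen_piece fun j e e' h he => ?_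
  rw [mem_within_iff] at he ⊢
  match j, h with
  | none, h => exact h ▸ he
  | some 0, h => exact Edge.glue_src_iff.1 h ▸ he
  | some 1, h =>
    rw [hA.src_mem_iff] at he ⊢
    exact Edge.glue_tgt_iff.1 h ▸ he
  | some (n + 2), h => exact (Edge.glue_label_iff.1 h).2.2.1 ▸ he

theorem existsInjCont_pieceOver {f : W → W} (hf : ∀ n x y, R n x y → R n (f x) (f y))
    (hf_inj : Function.Injective f) (hAB : MapsTo f A B) :
    ExistsInjCont (hz.pieceOver R A) (hz.pieceOver R B) := by
  refine GluingData.existsInjCont_piece (τ := Edge.map f hf) ?_ fun e he => ⟨hAB he.1, hAB he.2⟩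
  rintro (_ | j) e e'
  · exact (Edge.map_injective hf hf_inj).eq_iff
  · exact Edge.glue_map_iff hf hf_inj j e e'

/-- The point of the space of `R` representing the element `x`. -/
noncomputable def vertex (R : ℕ → W → W → Prop) (x : W) : (hz.edgeGluing R).Space :=
  (hz.edgeGluing R).point (z 0) (Edge.loop R x)

theorem point_zero_eq_vertex (e : Edge R) :
    (hz.edgeGluing R).point (z 0) e = hz.vertex R e.src :=
  (markedGluing.point_marked_eq_iff _ _).2 rfl

theorem vertex_injective : Function.Injective (hz.vertex R) := fun _ _ h =>
  (markedGluing.point_marked_eq_iff _ _).1 h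

theorem vertex_mem_pieceOver {x : W} (hx : x ∈ A) : hz.vertex R x ∈ hz.pieceOver R A :=
  ⟨_, _, Edge.loop_mem_within hx, rfl⟩

theorem exists_hom_of_continuous {F : hz.pieceOver R A → hz.pieceOver R B} (hF : Continuous F)
    (hF_inj : Function.Injective F) :
    ∃ f : A → B, (∀ n (x y : A), R n x y → R n (f x) (f y)) ∧
      ∀ x, F ⟨_, hz.vertex_mem_pieceOver (Subtype.property x)⟩ =
        ⟨_, hz.vertex_mem_pieceOver (f x).2⟩ := by
  obtain ⟨φ, hφ_inj, hφ, hFφ⟩ := hz.exists_hom_of_injective hF hF_inj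
  refine ⟨Edge.induced φ, fun n x y => Edge.induced_hom hφ hφ_inj, fun x => Subtype.ext ?_⟩
  exact (hFφ ⟨_, Edge.loop_mem_within x.2⟩ (z 0) _).trans (hz.point_zero_eq_vertex _)

theorem exists_leftInverse_hom_of_homeomorph (h : hz.pieceOver R A ≃ₜ hz.pieceOver R B) :
    ∃ (f : A → B) (g : B → A), (∀ n (x y : A), R n x y → R n (f x) (f y)) ∧
      (∀ n (x y : B), R n x y → R n (g x) (g y)) ∧ Function.LeftInverse g f := by
  obtain ⟨f, hf, hhf⟩ := hz.exists_hom_of_continuous h.continuous h.injective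
  obtain ⟨g, hg, hhg⟩ := hz.exists_hom_of_continuous h.symm.continuous h.symm.injective
  refine ⟨f, g, hf, hg, fun x => ?_⟩
  have hx := hhg (f x)
  rw [← hhf, h.symm_apply_apply] at hx
  exact Subtype.ext (hz.vertex_injective (congrArg Subtype.val hx)).symm

theorem mk_space (hK : lift.{u} #K ≤ #W) (hW : ℵ₀ ≤ #W) : #(hz.edgeGluing R).Space = #W := by
  refine le_antisymm ?_ (mk_le_of_injective hz.vertex_injective)
  choose k e hke using (hz.edgeGluing R).exists_eq_point
  have code_injective : Function.Injective fun x : (hz.edgeGluing R).Space =>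
      (k x, (e x).copy, (e x).label, (e x).src, (e x).tgt) := fun x y h => by
    simp only [Prod.mk.injEq] at h
    rw [hke x, hke y, h.1, Edge.ext h.2.1 h.2.2.1 h.2.2.2.1 h.2.2.2.2]
  refine (mk_le_of_injective code_injective).trans ?_
  simp only [mk_prod, lift_id, lift_uzero, mk_bool, lift_ofNat, mk_nat, lift_aleph0]
  refine mul_le_of_le hW hK <| mul_le_of_le hW (natCast_lt_aleph0.le.trans hW) <|
    mul_le_of_le hW hW <| mul_le_of_le hW le_rfl le_rfl

end IsRigidMarking

end Relational

/-! ### Ladders on a well-order -/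

section Ladder

variable {V : Type u} [LinearOrder V]

/-- The supremum of a strictly increasing sequence. -/
def IsCountableLimit (v : V) : Prop :=
  ∃ a : ℕ → V, StrictMono a ∧ IsLUB (range a) v

/-- A chosen strictly increasing sequence with supremum `v`. -/
noncomputable def IsCountableLimit.ladder {v : V} (hv : IsCountableLimit v) : ℕ → V :=
  hv.choose

namespace IsCountableLimit

variable {v : V} (hv : IsCountableLimit v)

theorem strictMono_ladder : StrictMono hv.ladder := hv.choose_spec.1

theorem isLUB_ladder : IsLUB (range hv.ladder) v := hv.choose_spec.2

theorem ladder_lt (n : ℕ) : hv.ladder n < v :=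
  (hv.strictMono_ladder n.lt_succ_self).trans_le (hv.isLUB_ladder.1 (mem_range_self _))

theorem exists_lt_ladder {x : V} (hx : x < v) : ∃ n, x < hv.ladder n := by
  obtain ⟨_, ⟨n, rfl⟩, hn⟩ := (lt_isLUB_iff hv.isLUB_ladder).1 hx
  exact ⟨n, hn⟩

end IsCountableLimit

variable [WellFoundedLT V]

theorem exists_isLUB_of_wellFoundedLT [OrderTop V] (s : Set V) : ∃ v, IsLUB s v :=
  have hs : (upperBounds s).Nonempty := ⟨⊤, fun _ _ => le_top⟩
  ⟨wellFounded_lt.min _ hs, wellFounded_lt.min_mem _ hs, fun _ hy => wellFounded_lt.min_le hy⟩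

variable {f : V → V} (hf : StrictMono f)
  (hf_ladder : ∀ v (hv : IsCountableLimit v), ∃ hfv : IsCountableLimit (f v),
    ∀ n, hfv.ladder n = f (hv.ladder n))
include hf hf_ladder

theorem IsCountableLimit.apply_eq {v : V} (hv : IsCountableLimit v) (hfv : ∀ y < v, f y < v) :
    f v = v := by
  obtain ⟨hlim, hladder⟩ := hf_ladder v hv
  refine le_antisymm (hlim.isLUB_ladder.2 ?_) hf.le_apply
  rintro _ ⟨n, rfl⟩
  rw [hladder]
  exact (hfv _ (hv.ladder_lt n)).le

/-- Otherwise the supremum `v` of the orbit of a moved point is fixed, hence so is its ladder; but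
the orbit cannot pass a fixed point. -/
theorem eq_id_of_map_ladder [OrderTop V] : f = id := by
  funext x
  by_contra hne
  have hx : x < f x := hf.le_apply.lt_of_ne' hne
  have orbit_strictMono : StrictMono fun k => f^[k] x := hf.strictMono_iterate_of_lt_map hx
  obtain ⟨v, hv⟩ := exists_isLUB_of_wellFoundedLT (range fun k => f^[k] x)
  have orbit_lt (k : ℕ) : f^[k] x < v :=
    (orbit_strictMono k.lt_succ_self).trans_le (hv.1 (mem_range_self _))
  have hv_lim : IsCountableLimit v := ⟨_, orbit_strictMono, hv⟩
  have hfv : f v = v := hv_lim.apply_eq hf hf_ladder fun y hy => by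
    obtain ⟨_, ⟨k, rfl⟩, hk⟩ := (lt_isLUB_iff hv).1 hy
    exact (hf hk).trans (f.iterate_succ_apply' k x ▸ orbit_lt (k + 1))
  obtain ⟨n, hn⟩ := hv_lim.exists_lt_ladder (orbit_lt 0)
  have ladder_fixed : f (hv_lim.ladder n) = hv_lim.ladder n := by
    obtain ⟨hlim, hladder⟩ := hf_ladder v hv_lim
    rw [← hladder]
    congr 1
  have orbit_le : ∀ y ∈ range fun k => f^[k] x, y ≤ hv_lim.ladder n := by
    rintro _ ⟨k, rfl⟩
    exact ((hf.iterate k hn).trans_eq (Function.iterate_fixed ladder_fixed k)).le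
  exact (hv_lim.ladder_lt n).not_ge (hv.2 orbit_le)

end Ladder

/-! ### A family of relational structures representing a quasiorder -/

/-- The elements of a disjoint union of copies of `V`, one for each component `comp` in `V` and
each `level`. -/
@[ext]
structure Node (V : Type*) where
  comp : V
  level : ℕ
  pos : V

namespace Node

variable {V : Type u}

/-- The same position in the same component, one level up. -/
def shift (x : Node V) : Node V := { x with level := x.level + 1 }

theorem shift_injective : Function.Injective (shift : Node V → Node V) := fun x y h => by
  simp only [shift, Node.mk.injEq, add_left_inj] at h
  exact Node.ext h.1 h.2.1 h.2.2

theorem mk_node (hV : ℵ₀ ≤ #V) : #(Node V) = #V := by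
  have pos_injective : Function.Injective fun x : V => Node.mk x 0 x := fun _ _ h =>
    congrArg pos h
  refine le_antisymm ?_ (mk_le_of_injective pos_injective)
  have coords_injective : Function.Injective fun x : Node V => (x.comp, x.level, x.pos) :=
    fun _ _ h => Node.ext (congrArg Prod.fst h) (congrArg (·.2.1) h) (congrArg (·.2.2) h)
  refine (mk_le_of_injective coords_injective).trans ?_
  simp only [mk_prod, lift_id, lift_uzero, mk_nat, lift_aleph0]
  exact mul_le_of_le hV le_rfl (mul_le_of_le hV hV le_rfl)

variable {Q : Type*} {ι : Q ↪ V} {le : Q → Q → Prop} {q q' : Q}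

/-- The components of all `p` below `q` at positive levels, and that of `q` also at level `0`. -/
def lowerComponents (ι : Q ↪ V) (le : Q → Q → Prop) (q : Q) : Set (Node V) :=
  {x | (∃ p, le p q ∧ x.comp = ι p) ∧ (x.level = 0 → x.comp = ι q)}

theorem mapsTo_shift_lowerComponents (trans : ∀ a b c, le a b → le b c → le a c) (h : le q q') :
    MapsTo shift (lowerComponents ι le q) (lowerComponents ι le q') := by
  rintro x ⟨⟨p, hp, hx⟩, -⟩
  exact ⟨⟨p, trans _ _ _ hp h, hx⟩, fun h0 => absurd h0 x.level.succ_ne_zero⟩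

variable [LinearOrder V]

/-- On every copy of `V`, the order, a mark at the position naming the component, a mark at
positive levels, and the ladders. -/
def Rel : ℕ → Node V → Node V → Prop
  | 0, x, y => x.comp = y.comp ∧ x.level = y.level ∧ x.pos < y.pos
  | 1, x, y => x = y ∧ x.pos = x.comp
  | 2, x, y => x = y ∧ x.level ≠ 0
  | n + 3, x, y => x.comp = y.comp ∧ x.level = y.level ∧
      ∃ hy : IsCountableLimit y.pos, hy.ladder n = x.pos

theorem Rel.comp_eq_and_level_eq : ∀ {n : ℕ} {x y : Node V},
    Rel n x y → x.comp = y.comp ∧ x.level = y.level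
  | 0, _, _, h | _ + 3, _, _, h => ⟨h.1, h.2.1⟩
  | 1, _, _, h | 2, _, _, h => ⟨congrArg comp h.1, congrArg level h.1⟩

theorem Rel.shift : ∀ {n : ℕ} {x y : Node V}, Rel n x y → Rel n x.shift y.shift
  | 0, _, _, h | _ + 3, _, _, h => ⟨h.1, congrArg (· + 1) h.2.1, h.2.2⟩
  | 1, _, _, h => ⟨congrArg Node.shift h.1, h.2⟩
  | 2, x, _, h => ⟨congrArg Node.shift h.1, x.level.succ_ne_zero⟩

section Hom

variable [WellFoundedLT V] [OrderTop V]

theorem exists_level_of_hom {i : V} {m : ℕ} {g : V → Node V}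
    (hg : ∀ n x y, Rel n ⟨i, m, x⟩ ⟨i, m, y⟩ → Rel n (g x) (g y)) :
    ∃ m', (m ≠ 0 → m' ≠ 0) ∧ ∀ x, g x = ⟨i, m', x⟩ := by
  have hpos : (fun x => (g x).pos) = id := by
    refine eq_id_of_map_ladder (fun x y h => (hg 0 x y ⟨rfl, rfl, h⟩).2.2) fun v hv => ?_
    have ladder_rel (n : ℕ) : Rel (n + 3) (g (hv.ladder n)) (g v) :=
      hg _ _ _ ⟨rfl, rfl, hv, rfl⟩
    exact ⟨(ladder_rel 0).2.2.1, fun n => (ladder_rel n).2.2.2⟩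
  have same_component (x : V) : (g x).comp = (g i).comp ∧ (g x).level = (g i).level := by
    rcases lt_trichotomy x i with h | rfl | h
    · exact (hg 0 x i ⟨rfl, rfl, h⟩).comp_eq_and_level_eq
    · exact ⟨rfl, rfl⟩
    · exact (hg 0 i x ⟨rfl, rfl, h⟩).comp_eq_and_level_eq.imp Eq.symm Eq.symm
  have hcomp : (g i).comp = i := (hg 1 i i ⟨rfl, rfl⟩).2.symm.trans (congrFun hpos i)
  refine ⟨(g i).level, fun hm => (hg 2 i i ⟨rfl, hm⟩).2, fun x => Node.ext ?_ ?_ ?_⟩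
  · exact (same_component x).1.trans hcomp
  · exact (same_component x).2
  · exact congrFun hpos x

end Hom

theorem isIsolated_lowerComponents : IsIsolated Rel (lowerComponents ι le q) := fun _ _ _ h => by
  obtain ⟨hcomp, hlevel⟩ := h.comp_eq_and_level_eq
  simp only [lowerComponents, mem_ofPred_eq, hcomp, hlevel]

variable [WellFoundedLT V] [OrderTop V] {f : lowerComponents ι le q → lowerComponents ι le q'}
  (hf : ∀ n (x y : lowerComponents ι le q), Rel n (x : Node V) y → Rel n (f x : Node V) (f y))
include hf

theorem exists_level_of_hom_lowerComponents {i : V} {m : ℕ}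
    (hm : ∀ x, ⟨i, m, x⟩ ∈ lowerComponents ι le q) :
    ∃ m', (m ≠ 0 → m' ≠ 0) ∧ ∀ x, f ⟨⟨i, m, x⟩, hm x⟩ = (⟨i, m', x⟩ : Node V) :=
  exists_level_of_hom fun n x y => hf n ⟨_, hm x⟩ ⟨_, hm y⟩

theorem le_of_hom_lowerComponents (refl : ∀ q, le q q) : le q q' := by
  have hmem (x : V) : ⟨ι q, 0, x⟩ ∈ lowerComponents ι le q := ⟨⟨q, refl q, rfl⟩, fun _ => rfl⟩
  obtain ⟨m', -, hm'⟩ := exists_level_of_hom_lowerComponents hf hmem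
  obtain ⟨⟨p, hp, hqp⟩, -⟩ := hm' (ι q) ▸ (f _).2
  exact ι.injective hqp ▸ hp

theorem eq_of_leftInverse_hom_lowerComponents (refl : ∀ q, le q q)
    {g : lowerComponents ι le q' → lowerComponents ι le q}
    (hg : ∀ n (x y : lowerComponents ι le q'), Rel n (x : Node V) y → Rel n (g x : Node V) (g y))
    (hgf : Function.LeftInverse g f) : q = q' := by
  have hmem (x : V) : ⟨ι q, 0, x⟩ ∈ lowerComponents ι le q := ⟨⟨q, refl q, rfl⟩, fun _ => rfl⟩
  obtain ⟨m, -, hfm⟩ := exists_level_of_hom_lowerComponents hf hmem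
  have hmem' (x : V) : ⟨ι q, m, x⟩ ∈ lowerComponents ι le q' := hfm x ▸ (f _).2
  obtain ⟨m', hm', hgm'⟩ := exists_level_of_hom_lowerComponents hg hmem'
  have hm'_eq : m' = 0 := by
    have hfq : f ⟨_, hmem (ι q)⟩ = ⟨_, hmem' (ι q)⟩ := Subtype.ext (hfm (ι q))
    have hgfq := hgf ⟨_, hmem (ι q)⟩
    rw [hfq] at hgfq
    exact congrArg level ((hgm' (ι q)).symm.trans (congrArg Subtype.val hgfq))
  exact ι.injective ((hmem' (ι q)).2 (not_not.1 fun hm => hm' hm hm'_eq))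

end Node

theorem mk_withTop_ord_toType {α : Cardinal.{u}} (hα : ℵ₀ ≤ α) :
    #(WithTop α.ord.ToType) = α := by
  rw [WithTop, mk_option, mk_ord_toType, add_one_eq hα]

theorem statement6 (α : Cardinal.{u}) (hα : Cardinal.continuum ≤ α) :
    ∃ (X : Type u) (tX : TopologicalSpace X),
      @TopologicalSpace.MetrizableSpace X tX ∧ #X = α ∧
      @RepresentsByInjCont α X tX := by
  obtain ⟨K, _, z, hz, hK⟩ := exists_isRigidMarking
  have hα₀ : ℵ₀ ≤ α := aleph0_le_continuum.trans hα
  let V := WithTop α.ord.ToType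
  have hV : #V = α := mk_withTop_ord_toType hα₀
  have hNode : #(Node V) = α := (Node.mk_node (hV.symm ▸ hα₀)).trans hV
  refine ⟨(hz.edgeGluing (Node.Rel (V := V))).Space, inferInstance, inferInstance, ?_, ?_⟩
  · refine (hz.mk_space ?_ (hNode.symm ▸ hα₀)).trans hNode
    rw [hNode]
    exact (lift_le_continuum.2 hK).trans hα
  intro Q le hQ refl trans
  obtain ⟨ι⟩ : Nonempty (Q ↪ V) := (le_def _ _).1 (hV.symm ▸ hQ)
  refine ⟨fun q => hz.pieceOver Node.Rel (Node.lowerComponents ι le q),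
    fun q => hz.isClopen_pieceOver Node.isIsolated_lowerComponents, fun q q' hne => ⟨fun h => ?_⟩,
    fun q q' => ⟨fun hle => ?_, fun ⟨F, hF, hF_inj⟩ => ?_⟩⟩
  · obtain ⟨f, g, hf, hg, hgf⟩ := hz.exists_leftInverse_hom_of_homeomorph h
    exact hne (Node.eq_of_leftInverse_hom_lowerComponents hf refl hg hgf)
  · exact hz.existsInjCont_pieceOver (fun _ _ _ => Node.Rel.shift) Node.shift_injective
      (Node.mapsTo_shift_lowerComponents trans hle)
  · obtain ⟨f, hf, -⟩ := hz.exists_hom_of_continuous hF hF_inj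
    exact Node.le_of_hom_lowerComponents hf refl
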